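/- Let B(·) be a ℂ^{m×m}-valued holomorphic function, λ an eigenvalue with right eigenvector y (B(λ)y = 0) and left eigenvector x (xᴴ B(λ) = 0) satisfying xᴴ B'(λ) y ≠ 0 and dim ker B(λ) = 1. Let Y_⊥ be an orthonormal basis of span{y}^⊥ and Z_⊥ an orthonormal basis of span{B'(λ)y}^⊥. Then the (m-1)×(m-1) matrix Z_⊥ᴴ B(λ) Y_⊥ is invertible. -/

import Mathlib

open Matrix

/-!
The only direction killed by `Zᴴ` is `B'(λ)y`. It lies outside the range of `B(λ)`, since the left
eigenvector `x` annihilates that range but not `B'(λ)y`; so `Zᴴ` is injective on the range of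
`B(λ)`. Likewise `B(λ)` is injective on the range of `Y`, because its kernel, spanned by `y`, meets
`span{y}^⊥` trivially. Hence `Zᴴ B(λ) Y` is injective, and it is square.
-/

theorem ker_eq_span_singleton_of_surjective {K V W : Type*} [DivisionRing K]
    [AddCommGroup V] [Module K V] [AddCommGroup W] [Module K W]
    {f : V →ₗ[K] W} {b : V} (hf : Function.Surjective f)
    (hdim : Module.finrank K V = Module.finrank K W + 1) (hb : f b = 0) (hb0 : b ≠ 0) :
    f.ker = K ∙ b := by
  have hker : Module.finrank K f.ker = 1 := by
    have : FiniteDimensional K V := .of_finrank_pos (by lia)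
    have hrank := f.finrank_range_add_finrank_ker
    rw [LinearMap.range_eq_top.mpr hf, finrank_top] at hrank
    lia
  exact eq_span_singleton_of_mem_of_finrank_eq_one hker hb hb0

theorem disjoint_ker_span_singleton {R M N : Type*} [Ring R] [IsDomain R]
    [AddCommGroup M] [Module R M] [AddCommGroup N] [Module R N] [Module.IsTorsionFree R N]
    {f : M →ₗ[R] N} {b : M} (hb : f b ≠ 0) : Disjoint f.ker (R ∙ b) := by
  rw [Submodule.disjoint_def]
  intro v hv hvb
  obtain ⟨c, rfl⟩ := Submodule.mem_span_singleton.mp hvb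
  rw [LinearMap.mem_ker, map_smul, smul_eq_zero_iff_left hb] at hv
  rw [hv, zero_smul]

theorem disjoint_range_mulVecLin_span_singleton {R m p : Type*} [CommRing R] [IsDomain R]
    [Fintype m] [Fintype p] {B : Matrix p m R} {w b : p → R}
    (hwB : w ᵥ* B = 0) (hwb : w ⬝ᵥ b ≠ 0) : Disjoint B.mulVecLin.range (R ∙ b) := by
  have hle : B.mulVecLin.range ≤ (dotProductBilin R R w).ker := by
    rintro _ ⟨v, rfl⟩
    simp [dotProduct_mulVec, hwB]
  exact (disjoint_ker_span_singleton hwb).mono_left hle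

/-- The left inverse `L` encodes that the columns of `Y` are independent and that `y`, unless zero,
lies outside their span; for columns orthogonal to `y` over `ℂ`, take `L = (Yᴴ Y)⁻¹ Yᴴ`. -/
theorem stmt_11_general {K m n p : Type*} [Field K] [Fintype m] [Fintype n] [DecidableEq n]
    [Fintype p] (hcard : Fintype.card p = Fintype.card n + 1)
    {A : Matrix n p K} {R : Matrix p n K} {B : Matrix p m K} {L : Matrix n m K} {Y : Matrix m n K}
    {w b : p → K} {y : m → K} (hAR : A * R = 1) (hAb : A *ᵥ b = 0)
    (hwB : w ᵥ* B = 0) (hwb : w ⬝ᵥ b ≠ 0) (hker : B.mulVecLin.ker ≤ K ∙ y)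
    (hLY : L * Y = 1) (hLy : L *ᵥ y = 0) : IsUnit (A * B * Y) := by
  have hb0 : b ≠ 0 := by
    rintro rfl
    exact hwb (dotProduct_zero w)
  have hA_surj : Function.Surjective A.mulVecLin := fun v => ⟨R *ᵥ v, by simp [hAR]⟩
  have hA_ker : A.mulVecLin.ker = K ∙ b :=
    ker_eq_span_singleton_of_surjective hA_surj (by simpa using hcard) hAb hb0
  rw [← mulVec_injective_iff_isUnit, ← coe_mulVecLin, injective_iff_map_eq_zero]
  intro v hv
  have hBYv_mem : B *ᵥ (Y *ᵥ v) ∈ K ∙ b := by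
    rw [← hA_ker]
    simpa [Matrix.mul_assoc] using hv
  have hBYv : B *ᵥ (Y *ᵥ v) = 0 :=
    Submodule.disjoint_def.mp (disjoint_range_mulVecLin_span_singleton hwB hwb) _
      ⟨Y *ᵥ v, rfl⟩ hBYv_mem
  obtain ⟨c, hc⟩ := Submodule.mem_span_singleton.mp (hker hBYv)
  calc v = L *ᵥ (Y *ᵥ v) := by rw [mulVec_mulVec, hLY, one_mulVec]
    _ = 0 := by rw [← hc, mulVec_smul, hLy, smul_zero]

theorem stmt_11 (k : ℕ) (B B' : Matrix (Fin (k + 1)) (Fin (k + 1)) ℂ)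
    (x y : Fin (k + 1) → ℂ) (hy0 : y ≠ 0) (hx0 : x ≠ 0)
    (hy : B.mulVec y = 0) (hx : vecMul (star x) B = 0)
    (hxB'y : star x ⬝ᵥ B'.mulVec y ≠ 0)
    (hker : ∀ z : Fin (k + 1) → ℂ, B.mulVec z = 0 → ∃ c : ℂ, z = c • y)
    (Y Z : Matrix (Fin (k + 1)) (Fin k) ℂ)
    (hY : Yᴴ * Y = 1) (hYy : Yᴴ.mulVec y = 0)
    (hZ : Zᴴ * Z = 1) (hZB'y : Zᴴ.mulVec (B'.mulVec y) = 0) :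
    IsUnit (Zᴴ * B * Y) :=
  stmt_11_general (by simp) hZ hZB'y hx hxB'y
    (fun z hz => Submodule.mem_span_singleton.mpr ((hker z hz).imp fun _ => Eq.symm)) hY hYy
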